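/- For a simple arrangement of hyperplanes in ℝˡ (hyperplanes in relative general position), the number f_k of k-dimensional faces equals Σ_{j=0}^{k} a_j · C(l−j, l−k), where a_j is the number of elements of dimension j in the intersection poset and C denotes the binomial coefficient. -/

import Mathlib

open scoped Classical

/-- The dimension of a subset of `ℝˡ`: the rank of the direction of its affine span. -/
noncomputable def setDim (l : ℕ) (F : Set (Fin l → ℝ)) : ℕ :=
  Module.finrank ℝ (affineSpan ℝ F).direction

/-- The intersection poset of a hyperplane arrangement: all nonempty intersections of
subfamilies (including `ℝˡ` itself as the empty intersection). -/
def arrFlats (l : ℕ) (A : Finset (Set (Fin l → ℝ))) : Set (Set (Fin l → ℝ)) :=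
  {Y | ∃ S : Finset (Set (Fin l → ℝ)), ↑S ⊆ (↑A : Set (Set (Fin l → ℝ))) ∧
    Y = ⋂₀ (↑S : Set (Set (Fin l → ℝ))) ∧ Y.Nonempty}

/-- The face of the arrangement `A` containing the point `x`: the connected component of
`x` in (the intersection of the hyperplanes through `x`) minus (the union of the
hyperplanes missing `x`). -/
def arrFace (l : ℕ) (A : Finset (Set (Fin l → ℝ))) (x : Fin l → ℝ) : Set (Fin l → ℝ) :=
  connectedComponentIn
    (⋂₀ {H | H ∈ A ∧ x ∈ H} \ ⋃₀ {H | H ∈ A ∧ x ∉ H}) x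

open Topology in
lemma fc_perturb {V ι : Type*} [AddCommGroup V] [Module ℝ V] (g : ι → (V →ᵃ[ℝ] ℝ))
    (I : Finset ι) (x q : V) :
    ∃ ε : ℝ, 0 < ε ∧ ∀ t : ℝ, |t| < ε → ∀ j ∈ I,
      (0 < g j x → 0 < g j (AffineMap.lineMap x q t)) ∧
      (g j x < 0 → g j (AffineMap.lineMap x q t) < 0) := by
  have h : ∀ᶠ t in 𝓝 (0:ℝ), ∀ j ∈ I,
      (0 < g j x → 0 < g j (AffineMap.lineMap x q t)) ∧
      (g j x < 0 → g j (AffineMap.lineMap x q t) < 0) := by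
    rw [Filter.eventually_all_finset]
    intro j _
    have hc : Filter.Tendsto (fun t : ℝ => g j (AffineMap.lineMap x q t)) (𝓝 0) (𝓝 (g j x)) := by
      have : Continuous (fun t : ℝ => g j (AffineMap.lineMap x q t)) := by
        simp_rw [AffineMap.apply_lineMap]
        simp only [AffineMap.lineMap_apply_module]
        fun_prop
      have := this.tendsto 0
      simpa using this
    apply Filter.Eventually.and
    · by_cases h : 0 < g j x
      · filter_upwards [hc.eventually (lt_mem_nhds h)] with t ht _ using ht
      · simp [h]
    · by_cases h : g j x < 0
      · filter_upwards [hc.eventually (gt_mem_nhds h)] with t ht _ using ht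
      · simp [h]
  rw [Metric.eventually_nhds_iff] at h
  obtain ⟨ε, h0, h⟩ := h
  exact ⟨ε, h0, fun t ht => h (by simpa using ht)⟩

/-- realised sign pattern -/
def fcR {V ι : Type*} [AddCommGroup V] [Module ℝ V] (g : ι → (V →ᵃ[ℝ] ℝ))
    (E : Set V) (I P : Finset ι) (x : V) : Prop :=
  x ∈ E ∧ (∀ i ∈ I, i ∈ P → 0 < g i x) ∧ (∀ i ∈ I, i ∉ P → g i x < 0)

lemma fc_card_powerset_insert {ι : Type*} (I : Finset ι) (i : ι) (hi : i ∉ I)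
    (p : Finset ι → Prop) :
    ((insert i I).powerset.filter p).card =
      (I.powerset.filter p).card + (I.powerset.filter (fun P => p (insert i P))).card := by
  simp only [Finset.card_filter]
  rw [Finset.sum_powerset_insert hi]

lemma fc_core {V ι : Type*} [AddCommGroup V] [Module ℝ V] (g : ι → (V →ᵃ[ℝ] ℝ))
    (I : Finset ι) : ∀ (E : Set V)
    (_ : ∀ p ∈ E, ∀ q ∈ E, ∀ t : ℝ, AffineMap.lineMap p q t ∈ E)
    (_ : ∀ T ⊆ I, ∀ i ∈ I, i ∉ T → (∃ x ∈ E, g i x = 0 ∧ ∀ j ∈ T, g j x = 0) →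
      ∃ x ∈ E, g i x ≠ 0 ∧ ∀ j ∈ T, g j x = 0),
    (I.powerset.filter (fun P => ∃ x, fcR g E I P x)).card =
    (I.powerset.filter (fun T => ∃ x ∈ E, ∀ j ∈ T, g j x = 0)).card := by
  induction I using Finset.induction_on with
  | empty => intro E _ _; simp [fcR, Finset.filter_singleton]
  | insert i I hi ih =>
    intro E hE hs
    have ih1 := ih E hE (fun T hT j hj => hs T (hT.trans (Finset.subset_insert _ _)) j
      (Finset.mem_insert_of_mem hj))
    have ih2 := ih (E ∩ {x | g i x = 0})
      (by
        rintro p ⟨hp, hp'⟩ q ⟨hq, hq'⟩ t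
        refine ⟨hE p hp q hq t, ?_⟩
        simp only [Set.mem_ofPred_eq] at *
        rw [AffineMap.apply_lineMap, hp', hq']; simp)
      (by
        rintro T hT j hj hjT ⟨x, ⟨hx, hx'⟩, hjx, hx2⟩
        obtain ⟨y, hy, hy1, hy2⟩ := hs (insert i T) (Finset.insert_subset_insert _ hT) j
          (Finset.mem_insert_of_mem hj)
          (by
            intro h
            rcases Finset.mem_insert.1 h with h | h
            · exact hi (h ▸ hj)
            · exact hjT h)
          ⟨x, hx, hjx, by
            intro a ha
            rcases Finset.mem_insert.1 ha with h | h
            · subst h; exact hx'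
            · exact hx2 a h⟩
        exact ⟨y, ⟨hy, hy2 i (Finset.mem_insert_self _ _)⟩, hy1,
          fun a ha => hy2 a (Finset.mem_insert_of_mem ha)⟩)
    rw [fc_card_powerset_insert I i hi, fc_card_powerset_insert I i hi, ← ih1]
    have e2 : (I.powerset.filter (fun T => ∃ x ∈ E, ∀ j ∈ insert i T, g j x = 0)).card =
        (I.powerset.filter (fun T => ∃ x ∈ E ∩ {x | g i x = 0}, ∀ j ∈ T, g j x = 0)).card := by
      congr 1
      apply Finset.filter_congr
      intro T _
      simp [and_assoc]
    rw [e2, ← ih2, ← Finset.card_union_add_card_inter, ← Finset.filter_or, ← Finset.filter_and]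
    -- movement
    have key : ∀ x ∈ E, g i x = 0 → ∀ P : Finset ι, fcR g E I P x →
        (∃ y, fcR g E I P y ∧ 0 < g i y) ∧ (∃ y, fcR g E I P y ∧ g i y < 0) := by
      rintro x hx hx0 P ⟨-, hP1, hP2⟩
      obtain ⟨q, hq, hq0, -⟩ := hs ∅ (by simp) i (by simp) (by simp) ⟨x, hx, hx0, by simp⟩
      obtain ⟨ε, h0, hε⟩ := fc_perturb g I x q
      have hR : ∀ t : ℝ, |t| < ε → fcR g E I P (AffineMap.lineMap x q t) := fun t ht =>
        ⟨hE x hx q hq t, fun j hj hjP => (hε t ht j hj).1 (hP1 j hj hjP),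
          fun j hj hjP => (hε t ht j hj).2 (hP2 j hj hjP)⟩
      have hv : ∀ t : ℝ, g i (AffineMap.lineMap x q t) = t * g i q := by
        intro t
        rw [AffineMap.apply_lineMap, hx0, AffineMap.lineMap_apply_module]; simp
      have a1 : |ε / 2| < ε := by rw [abs_of_pos (by linarith)]; linarith
      have a2 : |-(ε / 2)| < ε := by rw [abs_neg]; exact a1
      rcases lt_or_gt_of_ne hq0 with h | h
      · exact ⟨⟨_, hR _ a2, by rw [hv]; nlinarith⟩, ⟨_, hR _ a1, by rw [hv]; nlinarith⟩⟩
      · exact ⟨⟨_, hR _ a1, by rw [hv]; nlinarith⟩, ⟨_, hR _ a2, by rw [hv]; nlinarith⟩⟩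
    have r1 : ∀ P ∈ I.powerset, ∀ x, fcR g E (insert i I) P x ↔ fcR g E I P x ∧ g i x < 0 := by
      intro P hP x
      have : i ∉ P := fun h => hi (Finset.mem_powerset.1 hP h)
      simp only [fcR, Finset.mem_insert, forall_eq_or_imp]
      tauto
    have r2 : ∀ P ∈ I.powerset, ∀ x,
        fcR g E (insert i I) (insert i P) x ↔ fcR g E I P x ∧ 0 < g i x := by
      intro P hP x
      have h2 : ∀ j ∈ I, j ≠ i := fun j hj h => hi (h ▸ hj)
      simp only [fcR, Finset.mem_insert, forall_eq_or_imp]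
      constructor
      · rintro ⟨h, ⟨h1, h3⟩, -, h5⟩
        exact ⟨⟨h, fun j hj hjP => h3 j hj (Or.inr hjP),
          fun j hj hjP => h5 j hj (by have := h2 j hj; tauto)⟩, h1 (by simp)⟩
      · rintro ⟨⟨h, h1, h3⟩, h4⟩
        refine ⟨h, ⟨fun _ => h4, fun j hj hjP => h1 j hj (by have := h2 j hj; tauto)⟩, by simp,
          fun j hj hjP => h3 j hj (by tauto)⟩
    congr 2
    · apply Finset.filter_congr
      intro P hP
      simp only [r1 P hP, r2 P hP]
      constructor
      · rintro (⟨x, h, -⟩ | ⟨x, h, -⟩) <;> exact ⟨x, h⟩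
      · rintro ⟨x, h⟩
        rcases lt_trichotomy (g i x) 0 with h1 | h1 | h1
        · exact Or.inl ⟨x, h, h1⟩
        · exact Or.inl (key x h.1 h1 P h).2
        · exact Or.inr ⟨x, h, h1⟩
    · apply Finset.filter_congr
      intro P hP
      simp only [r1 P hP, r2 P hP]
      constructor
      · rintro ⟨⟨x, hx, hx0⟩, ⟨y, hy, hy0⟩⟩
        have hd : 0 < g i y - g i x := by linarith
        set t := (- g i x) / (g i y - g i x) with ht
        have ht0 : 0 < t := div_pos (by linarith) hd
        have ht1 : t < 1 := by rw [ht, div_lt_one hd]; linarith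
        have hv : ∀ j, g j (AffineMap.lineMap x y t) = (1 - t) * g j x + t * g j y := by
          intro j
          rw [AffineMap.apply_lineMap, AffineMap.lineMap_apply_module]; simp
        refine ⟨AffineMap.lineMap x y t, ⟨hE x hx.1 y hy.1 t, ?_⟩, ?_, ?_⟩
        · simp only [Set.mem_ofPred_eq]
          rw [hv, ht]; field_simp; ring
        · intro j hj hjP
          rw [hv]
          have := hx.2.1 j hj hjP
          have := hy.2.1 j hj hjP
          have : 0 < 1 - t := by linarith
          positivity
        · intro j hj hjP
          rw [hv]
          have := hx.2.2 j hj hjP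
          have := hy.2.2 j hj hjP
          have : 0 < 1 - t := by linarith
          nlinarith
      · rintro ⟨x, ⟨hx, hx0⟩, h1, h2⟩
        have := key x hx hx0 P ⟨hx, h1, h2⟩
        exact ⟨this.2, this.1⟩

/-- The candidate face. -/
def fcF {V ι : Type*} [AddCommGroup V] [Module ℝ V] (g : ι → (V →ᵃ[ℝ] ℝ))
    (A S P : Finset ι) : Set V := {x | fcR g {y | ∀ i ∈ S, g i y = 0} (A \ S) P x}

lemma fc_mem {l : ℕ} {A : Finset (Set (Fin l → ℝ))} {g : Set (Fin l → ℝ) → ((Fin l → ℝ) →ᵃ[ℝ] ℝ)}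
    (hg : ∀ H ∈ A, ∀ x, x ∈ H ↔ g H x = 0) {S : Finset (Set (Fin l → ℝ))} (hS : S ⊆ A)
    (x : Fin l → ℝ) : x ∈ ⋂₀ (↑S : Set (Set (Fin l → ℝ))) ↔ ∀ H ∈ S, g H x = 0 := by
  simp only [Set.mem_sInter, Finset.mem_coe]
  exact forall₂_congr fun H hH => hg H (hS hH) x

lemma fc_face {l : ℕ} {A : Finset (Set (Fin l → ℝ))} {g : Set (Fin l → ℝ) → ((Fin l → ℝ) →ᵃ[ℝ] ℝ)}
    (hg : ∀ H ∈ A, ∀ x, x ∈ H ↔ g H x = 0) (x : Fin l → ℝ) :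
    arrFace l A x = fcF g A (A.filter (fun H => g H x = 0)) (A.filter (fun H => 0 < g H x)) := by
  have hF : ∀ y, y ∈ fcF g A (A.filter (fun H => g H x = 0)) (A.filter (fun H => 0 < g H x)) ↔
      ∀ H ∈ A, (g H x = 0 → g H y = 0) ∧ (0 < g H x → 0 < g H y) ∧ (g H x < 0 → g H y < 0) := by
    intro y
    simp only [fcF, fcR, Set.mem_ofPred_eq, Finset.mem_sdiff, Finset.mem_filter]
    constructor
    · rintro ⟨h1, h2, h3⟩ H hH
      exact ⟨fun h => h1 H ⟨hH, h⟩, fun h => h2 H ⟨hH, fun h' => h.ne' h'.2⟩ ⟨hH, h⟩,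
        fun h => h3 H ⟨hH, fun h' => h.ne h'.2⟩ (fun h' => h.not_gt h'.2)⟩
    · intro h
      refine ⟨fun H hH => (h H hH.1).1 hH.2, fun H hH hH' => (h H hH.1).2.1 hH'.2,
        fun H hH hH' => (h H hH.1).2.2 ?_⟩
      rcases lt_trichotomy (g H x) 0 with h1 | h1 | h1
      · exact h1
      · exact absurd ⟨hH.1, h1⟩ hH.2
      · exact absurd ⟨hH.1, h1⟩ hH'
  have hU : ∀ y, y ∈ (⋂₀ {H | H ∈ A ∧ x ∈ H} \ ⋃₀ {H | H ∈ A ∧ x ∉ H}) ↔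
      ∀ H ∈ A, (g H x = 0 → g H y = 0) ∧ (g H x ≠ 0 → g H y ≠ 0) := by
    intro y
    simp only [Set.mem_sdiff, Set.mem_sInter, Set.mem_sUnion, Set.mem_ofPred_eq, not_exists, not_and]
    constructor
    · rintro ⟨h1, h2⟩ H hH
      have e1 := hg H hH x
      have e2 := hg H hH y
      have := h1 H
      have := h2 H
      tauto
    · intro h
      refine ⟨fun H hH => ?_, fun H hH => ?_⟩ <;>
      · have e1 := hg H hH.1 x
        have e2 := hg H hH.1 y
        have := h H hH.1
        tauto
  have hxU := (hU x).2 (fun H hH => ⟨id, id⟩)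
  have hcont : ∀ H, Continuous (g H) := fun H => (g H).continuous_of_finiteDimensional
  unfold arrFace
  apply Set.Subset.antisymm
  · intro y hy
    rw [hF]
    intro H hH
    have hyU := (hU y).1 (connectedComponentIn_subset _ _ hy) H hH
    have hxC := mem_connectedComponentIn hxU
    have hpc := isPreconnected_connectedComponentIn
      (F := (⋂₀ {H | H ∈ A ∧ x ∈ H} \ ⋃₀ {H | H ∈ A ∧ x ∉ H})) (x := x)
    refine ⟨hyU.1, fun h => ?_, fun h => ?_⟩
    · by_contra h'
      obtain ⟨z, hz, hz0⟩ := hpc.intermediate_value hy hxC (hcont H).continuousOn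
        (show (0:ℝ) ∈ Set.Icc _ _ from ⟨not_lt.1 h', h.le⟩)
      exact ((hU z).1 (connectedComponentIn_subset _ _ hz) H hH).2 h.ne' hz0
    · by_contra h'
      obtain ⟨z, hz, hz0⟩ := hpc.intermediate_value hxC hy (hcont H).continuousOn
        (show (0:ℝ) ∈ Set.Icc _ _ from ⟨h.le, not_lt.1 h'⟩)
      exact ((hU z).1 (connectedComponentIn_subset _ _ hz) H hH).2 h.ne hz0
  · apply IsPreconnected.subset_connectedComponentIn
    · apply Convex.isPreconnected
      intro y hy z hz a b ha hb hab
      rw [hF] at hy hz ⊢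
      intro H hH
      have hv : g H (a • y + b • z) = a * g H y + b * g H z := by
        have : a = 1 - b := by linarith
        subst this
        rw [← AffineMap.lineMap_apply_module, AffineMap.apply_lineMap,
          AffineMap.lineMap_apply_module]
        simp
      obtain ⟨y1, y2, y3⟩ := hy H hH
      obtain ⟨z1, z2, z3⟩ := hz H hH
      rw [hv]
      refine ⟨fun h => by rw [y1 h, z1 h]; simp, fun h => ?_, fun h => ?_⟩
      · have := y2 h
        have := z2 h
        rcases ha.eq_or_lt with h0 | h0
        · have : b = 1 := by linarith
          subst this; rw [← h0]; linarith
        · have := mul_pos h0 (y2 h)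
          have := mul_nonneg hb (z2 h).le
          linarith
      · have := y3 h
        have := z3 h
        rcases ha.eq_or_lt with h0 | h0
        · have : b = 1 := by linarith
          subst this; rw [← h0]; linarith
        · have := mul_neg_of_pos_of_neg h0 (y3 h)
          have := mul_nonpos_of_nonneg_of_nonpos hb (z3 h).le
          linarith
    · rw [hF]; exact fun H hH => ⟨id, id, id⟩
    · intro y hy
      rw [hF] at hy
      rw [hU]
      intro H hH
      obtain ⟨h1, h2, h3⟩ := hy H hH
      refine ⟨h1, fun h => ?_⟩
      rcases lt_or_gt_of_ne h with h | h
      · exact (h3 h).ne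
      · exact (h2 h).ne'

lemma fc_face' {l : ℕ} {A : Finset (Set (Fin l → ℝ))} {g : Set (Fin l → ℝ) → ((Fin l → ℝ) →ᵃ[ℝ] ℝ)}
    {S P : Finset (Set (Fin l → ℝ))} (hS : S ⊆ A) (hP : P ⊆ A \ S) {x : Fin l → ℝ}
    (hx : x ∈ fcF g A S P) :
    A.filter (fun H => g H x = 0) = S ∧ A.filter (fun H => 0 < g H x) = P := by
  obtain ⟨h1, h2, h3⟩ := hx
  simp only [Finset.mem_sdiff] at h2 h3
  constructor
  · ext H
    simp only [Finset.mem_filter]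
    constructor
    · rintro ⟨hH, h0⟩
      by_contra hc
      by_cases hp : H ∈ P
      · exact (h2 H ⟨hH, hc⟩ hp).ne' h0
      · exact (h3 H ⟨hH, hc⟩ hp).ne h0
    · intro h; exact ⟨hS h, h1 H h⟩
  · ext H
    simp only [Finset.mem_filter]
    constructor
    · rintro ⟨hH, h0⟩
      by_contra hp
      by_cases hc : H ∈ S
      · exact h0.ne' (h1 H hc)
      · exact (h3 H ⟨hH, hc⟩ hp).not_gt h0
    · intro h
      have := Finset.mem_sdiff.1 (hP h)
      exact ⟨this.1, h2 H this h⟩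

lemma fc_dim {l : ℕ} {A : Finset (Set (Fin l → ℝ))} {g : Set (Fin l → ℝ) → ((Fin l → ℝ) →ᵃ[ℝ] ℝ)}
    (hg : ∀ H ∈ A, ∀ x, x ∈ H ↔ g H x = 0)
    {S P : Finset (Set (Fin l → ℝ))} (hS : S ⊆ A) {x : Fin l → ℝ}
    (hx : x ∈ fcF g A S P) :
    setDim l (fcF g A S P) = setDim l (⋂₀ (↑S : Set (Set (Fin l → ℝ)))) := by
  suffices h : affineSpan ℝ (fcF g A S P) = affineSpan ℝ (⋂₀ (↑S : Set (Set (Fin l → ℝ)))) by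
    unfold setDim
    rw [h]
  apply le_antisymm
  · apply affineSpan_mono
    intro y hy
    rw [fc_mem hg hS]
    exact hy.1
  · rw [affineSpan_le]
    intro q hq
    rw [fc_mem hg hS] at hq
    obtain ⟨ε, h0, hε⟩ := fc_perturb g (A \ S) x q
    have a1 : |ε / 2| < ε := by rw [abs_of_pos (by linarith)]; linarith
    have hm : AffineMap.lineMap x q (ε / 2) ∈ fcF g A S P := by
      refine ⟨fun H hH => ?_, fun H hH hHP => (hε _ a1 H hH).1 (hx.2.1 H hH hHP),
        fun H hH hHP => (hε _ a1 H hH).2 (hx.2.2 H hH hHP)⟩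
      rw [AffineMap.apply_lineMap, hx.1 H hH, hq H hH]; simp
    have e : q = AffineMap.lineMap x (AffineMap.lineMap x q (ε / 2) : Fin l → ℝ) (2 / ε) := by
      have hne : ε ≠ 0 := h0.ne'
      ext i
      simp only [AffineMap.lineMap_apply_module, Pi.add_apply, Pi.smul_apply, smul_eq_mul]
      field_simp
      ring
    rw [e]
    exact AffineMap.lineMap_mem _ (subset_affineSpan ℝ _ hx) (subset_affineSpan ℝ _ hm)

lemma fc_comb {ι : Type*} (A : Finset ι) (C : Finset ι → Prop) (l k : ℕ) (hk : k ≤ l)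
    (hC : ∀ T ⊆ A, C T → T.card ≤ l) :
    ∑ S ∈ A.powerset with S.card = l - k,
      ((A \ S).powerset.filter (fun T => C (S ∪ T))).card =
    ∑ j ∈ Finset.range (k + 1),
      (A.powerset.filter (fun T => T.card = l - j ∧ C T)).card * Nat.choose (l - j) (l - k) := by
  have h1 : ∀ S ∈ A.powerset.filter (fun S => S.card = l - k),
      ((A \ S).powerset.filter (fun T => C (S ∪ T))).card =
      ((A.powerset.filter C).filter (fun T => S ⊆ T)).card := by
    intro S hS
    have hSA := Finset.mem_powerset.1 (Finset.mem_filter.1 hS).1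
    refine Finset.card_bij' (fun T _ => S ∪ T) (fun T _ => T \ S) ?_ ?_ ?_ ?_
    · intro T hT
      simp only [Finset.mem_filter, Finset.mem_powerset] at hT ⊢
      exact ⟨⟨Finset.union_subset hSA (hT.1.trans Finset.sdiff_subset), hT.2⟩,
        Finset.subset_union_left⟩
    · intro T hT
      simp only [Finset.mem_filter, Finset.mem_powerset] at hT ⊢
      refine ⟨Finset.sdiff_subset_sdiff hT.1.1 le_rfl, ?_⟩
      rw [Finset.union_sdiff_of_subset hT.2]; exact hT.1.2
    · intro T hT
      simp only [Finset.mem_filter, Finset.mem_powerset] at hT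
      ext a
      have := @hT.1 a
      simp only [Finset.mem_sdiff, Finset.mem_union] at *
      tauto
    · intro T hT
      simp only [Finset.mem_filter, Finset.mem_powerset] at hT
      exact Finset.union_sdiff_of_subset hT.2
  have h2 : ∑ S ∈ A.powerset with S.card = l - k,
      ((A.powerset.filter C).filter (fun T => S ⊆ T)).card =
      ∑ T ∈ A.powerset.filter C,
        ((A.powerset.filter (fun S => S.card = l - k)).filter (fun S => S ⊆ T)).card := by
    simp only [Finset.card_filter (fun T => _ ⊆ T), Finset.card_filter (fun S => S ⊆ _)]
    exact Finset.sum_comm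
  have h3 : ∀ T ∈ A.powerset.filter C,
      ((A.powerset.filter (fun S => S.card = l - k)).filter (fun S => S ⊆ T)).card =
      Nat.choose T.card (l - k) := by
    intro T hT
    have hTA := Finset.mem_powerset.1 (Finset.mem_filter.1 hT).1
    rw [← Finset.card_powersetCard]
    congr 1
    ext S
    simp only [Finset.mem_filter, Finset.mem_powerset, Finset.mem_powersetCard]
    constructor
    · rintro ⟨⟨_, h⟩, h'⟩; exact ⟨h', h⟩
    · rintro ⟨h', h⟩; exact ⟨⟨h'.trans hTA, h⟩, h'⟩
  rw [Finset.sum_congr rfl h1, h2, Finset.sum_congr rfl h3]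
  have h4 : ∑ T ∈ A.powerset.filter C, Nat.choose T.card (l - k) =
      ∑ T ∈ (A.powerset.filter C).filter (fun T => l - T.card ≤ k), Nat.choose T.card (l - k) := by
    symm
    apply Finset.sum_subset (Finset.filter_subset _ _)
    intro T hT hT'
    apply Nat.choose_eq_zero_of_lt
    by_contra h
    exact hT' (Finset.mem_filter.2 ⟨hT, by omega⟩)
  rw [h4, ← Finset.sum_fiberwise_of_maps_to (t := Finset.range (k + 1)) (g := fun T => l - T.card)
    (by
      intro T hT
      have := (Finset.mem_filter.1 hT).2
      simp only [Finset.mem_range]; omega)]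
  apply Finset.sum_congr rfl
  intro j hj
  have hj' : j ≤ k := by have := Finset.mem_range.1 hj; omega
  have h5 : ((A.powerset.filter C).filter (fun T => l - T.card ≤ k)).filter
      (fun T => l - T.card = j) = A.powerset.filter (fun T => T.card = l - j ∧ C T) := by
    ext T
    simp only [Finset.mem_filter, Finset.mem_powerset]
    constructor
    · rintro ⟨⟨⟨h, hc⟩, _⟩, he⟩
      have := hC T h hc
      exact ⟨h, by omega, hc⟩
    · rintro ⟨h, he, hc⟩
      exact ⟨⟨⟨h, hc⟩, by omega⟩, by omega⟩
  rw [h5, Finset.sum_congr rfl (g := fun _ => Nat.choose (l - j) (l - k))]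
  · simp
  · intro T hT
    rw [(Finset.mem_filter.1 hT).2.1]

open Finset in
/-- For a simple arrangement of hyperplanes in `ℝˡ` (hyperplanes in relative
general position), the number `f_k` of `k`-dimensional faces equals
`∑_{j=0}^{k} a_j · C(l-j, l-k)`, where `a_j` is the number of `j`-dimensional elements of
the intersection poset. -/
theorem face_count_of_simple_hyperplane_arrangement
    (l : ℕ) (A : Finset (Set (Fin l → ℝ)))
    (hhyp : ∀ H ∈ A, ∃ f : (Fin l → ℝ) →ₗ[ℝ] ℝ, f ≠ 0 ∧ ∃ c : ℝ, H = {x | f x = c})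
    (hsimple : ∀ S : Finset (Set (Fin l → ℝ)), ↑S ⊆ (↑A : Set (Set (Fin l → ℝ))) →
      (⋂₀ (↑S : Set (Set (Fin l → ℝ)))).Nonempty →
      S.card ≤ l ∧ setDim l (⋂₀ (↑S : Set (Set (Fin l → ℝ)))) = l - S.card)
    (k : ℕ) (hk : k ≤ l) :
    Nat.card {F : Set (Fin l → ℝ) | F ∈ Set.range (arrFace l A) ∧ setDim l F = k} =
      ∑ j ∈ Finset.range (k + 1),
        Nat.card {Y | Y ∈ arrFlats l A ∧ setDim l Y = j} *
          Nat.choose (l - j) (l - k) := by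
  have hex : ∀ H : Set (Fin l → ℝ), ∃ g : (Fin l → ℝ) →ᵃ[ℝ] ℝ, H ∈ A → ∀ x, x ∈ H ↔ g x = 0 := by
    intro H
    by_cases hH : H ∈ A
    · obtain ⟨f, -, c, rfl⟩ := hhyp H hH
      refine ⟨f.toAffineMap - AffineMap.const ℝ _ c, fun _ x => ?_⟩
      simp [sub_eq_zero]
    · exact ⟨0, fun h => absurd h hH⟩
  choose g hg using hex
  set C : Finset (Set (Fin l → ℝ)) → Prop := fun T => ∃ x, ∀ H ∈ T, g H x = 0 with hCdef
  have hCne : ∀ T ⊆ A, (⋂₀ (↑T : Set (Set (Fin l → ℝ)))).Nonempty ↔ C T := fun T hT =>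
    exists_congr fun x => fc_mem hg hT x
  have hs : ∀ T ⊆ A, C T → T.card ≤ l ∧
      setDim l (⋂₀ (↑T : Set (Set (Fin l → ℝ)))) = l - T.card := fun T hT hc =>
    hsimple T (by exact_mod_cast hT) ((hCne T hT).2 hc)
  -- flats
  have hflat : ∀ j ∈ Finset.range (k + 1), Nat.card {Y | Y ∈ arrFlats l A ∧ setDim l Y = j} =
      (A.powerset.filter (fun T => T.card = l - j ∧ C T)).card := by
    intro j hj
    have hj' : j ≤ l := by have := Finset.mem_range.1 hj; omega
    have himg : {Y | Y ∈ arrFlats l A ∧ setDim l Y = j} =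
        (fun T : Finset (Set (Fin l → ℝ)) => ⋂₀ (↑T : Set (Set (Fin l → ℝ)))) ''
          (↑(A.powerset.filter (fun T => T.card = l - j ∧ C T)) :
            Set (Finset (Set (Fin l → ℝ)))) := by
      ext Y
      simp only [Set.mem_ofPred_eq, Set.mem_image, Finset.coe_filter, Finset.mem_powerset, arrFlats]
      constructor
      · rintro ⟨⟨S, hS, rfl, hne⟩, hd⟩
        have hS' : S ⊆ A := by exact_mod_cast hS
        have hc := (hCne S hS').1 hne
        have := hs S hS' hc
        exact ⟨S, ⟨hS', by omega, hc⟩, rfl⟩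
      · rintro ⟨S, ⟨hS, hcard, hc⟩, rfl⟩
        have := hs S hS hc
        exact ⟨⟨S, by exact_mod_cast hS, rfl, (hCne S hS).2 hc⟩, by omega⟩
    have hinj : Set.InjOn (fun T : Finset (Set (Fin l → ℝ)) => ⋂₀ (↑T : Set (Set (Fin l → ℝ))))
          (↑(A.powerset.filter (fun T => T.card = l - j ∧ C T)) :
            Set (Finset (Set (Fin l → ℝ)))) := by
      intro S hS T hT hST
      simp only [Finset.coe_filter, Finset.mem_powerset, Set.mem_ofPred_eq] at hS hT hST
      have hU : S ∪ T ⊆ A := Finset.union_subset hS.1 hT.1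
      have e : ⋂₀ (↑(S ∪ T) : Set (Set (Fin l → ℝ))) = ⋂₀ (↑S : Set (Set (Fin l → ℝ))) := by
        rw [Finset.coe_union, Set.sInter_union, ← hST, Set.inter_self]
      have hcU : C (S ∪ T) := (hCne _ hU).1 (by rw [e]; exact (hCne S hS.1).2 hS.2.2)
      have h1 := hs _ hU hcU
      have h2 := hs S hS.1 hS.2.2
      rw [e] at h1
      have h3 : S = S ∪ T := Finset.eq_of_subset_of_card_le Finset.subset_union_left (by omega)
      have h4 : T = S ∪ T := Finset.eq_of_subset_of_card_le Finset.subset_union_right (by omega)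
      rw [h3, ← h4]
    rw [himg, Nat.card_coe_set_eq, Set.InjOn.ncard_image hinj, Set.ncard_coe_finset]
  rw [Finset.sum_congr rfl (fun j hj => by rw [hflat j hj]),
    ← fc_comb A C l k hk (fun T hT hc => (hs T hT hc).1)]
  -- core
  have hcore : ∀ S ∈ A.powerset.filter (fun S => S.card = l - k),
      ((A \ S).powerset.filter (fun T => C (S ∪ T))).card =
      ((A \ S).powerset.filter
        (fun P => ∃ x, fcR g {y | ∀ i ∈ S, g i y = 0} (A \ S) P x)).card := by
    intro S hS
    have hSA := Finset.mem_powerset.1 (Finset.mem_filter.1 hS).1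
    rw [fc_core]
    · congr 1
      apply Finset.filter_congr
      intro T _
      simp only [hCdef, Set.mem_ofPred_eq, Finset.mem_union, or_imp, forall_and]
    · intro p hp q hq t i hi
      rw [AffineMap.apply_lineMap, hp i hi, hq i hi]; simp
    · rintro T hT i hi hiT ⟨x, hx, hix, hTx⟩
      by_contra hno
      push Not at hno
      have hi' := Finset.mem_sdiff.1 hi
      have hU : S ∪ T ⊆ A := Finset.union_subset hSA (hT.trans Finset.sdiff_subset)
      have hU' : insert i (S ∪ T) ⊆ A := Finset.insert_subset hi'.1 hU
      have hxU : ∀ H ∈ S ∪ T, g H x = 0 := by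
        intro H hH
        rcases Finset.mem_union.1 hH with h | h
        · exact hx H h
        · exact hTx H h
      have h1 := hs _ hU ⟨x, hxU⟩
      have h2 := hs _ hU' ⟨x, by
        intro H hH
        rcases Finset.mem_insert.1 hH with h | h
        · rw [h]; exact hix
        · exact hxU H h⟩
      have e : ⋂₀ (↑(insert i (S ∪ T)) : Set (Set (Fin l → ℝ))) =
          ⋂₀ (↑(S ∪ T) : Set (Set (Fin l → ℝ))) := by
        ext y
        rw [fc_mem hg hU, fc_mem hg hU']
        constructor
        · intro h H hH; exact h H (Finset.mem_insert_of_mem hH)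
        · intro h H hH
          rcases Finset.mem_insert.1 hH with h' | h'
          · by_contra hc
            rw [h'] at hc
            obtain ⟨j, hj, hj0⟩ := hno y
              (fun a ha => h a (Finset.mem_union_left _ ha)) hc
            exact hj0 (h j (Finset.mem_union_right _ hj))
          · exact h H h'
      rw [e, Finset.card_insert_of_notMem (by
        rw [Finset.mem_union]; rintro (h | h)
        · exact hi'.2 h
        · exact hiT h)] at h2
      omega
  refine Eq.trans ?_ ((Finset.sum_congr rfl hcore).symm.trans (by congr!))
  rw [← Finset.card_sigma]
  set D := (A.powerset.filter (fun S => S.card = l - k)).sigma (fun S => (A \ S).powerset.filter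
        (fun P => ∃ x, fcR g {y | ∀ i ∈ S, g i y = 0} (A \ S) P x)) with hD
  have hDm : ∀ d, d ∈ D ↔ (d.1 ⊆ A ∧ d.1.card = l - k) ∧ d.2 ⊆ A \ d.1 ∧
      (fcF g A d.1 d.2).Nonempty := by
    intro d
    simp only [hD, Finset.mem_sigma, Finset.mem_filter, Finset.mem_powerset]
    rfl
  have himg : {F : Set (Fin l → ℝ) | F ∈ Set.range (arrFace l A) ∧ setDim l F = k} =
      (fun d : (_ : Finset (Set (Fin l → ℝ))) × Finset (Set (Fin l → ℝ)) => fcF g A d.1 d.2) ''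
        (D : Set ((_ : Finset (Set (Fin l → ℝ))) × Finset (Set (Fin l → ℝ)))) := by
    ext F
    simp only [Set.mem_ofPred_eq, Set.mem_image, Finset.mem_coe, hDm, Set.mem_range]
    constructor
    · rintro ⟨⟨x, rfl⟩, hd⟩
      have hx : x ∈ arrFace l A x := by
        apply mem_connectedComponentIn
        simp only [Set.mem_sdiff, Set.mem_sInter, Set.mem_sUnion, Set.mem_ofPred_eq]
        exact ⟨fun H hH => hH.2, fun ⟨H, hH, h⟩ => hH.2 h⟩
      rw [fc_face hg] at hd hx
      have hSA : A.filter (fun H => g H x = 0) ⊆ A := Finset.filter_subset _ _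
      rw [fc_dim hg hSA hx] at hd
      have := hs _ hSA ⟨x, hx.1⟩
      refine ⟨⟨A.filter (fun H => g H x = 0), A.filter (fun H => 0 < g H x)⟩,
        ⟨⟨hSA, by dsimp only; omega⟩, ?_, ⟨x, hx⟩⟩, (fc_face hg x).symm⟩
      intro H hH
      simp only [Finset.mem_sdiff, Finset.mem_filter] at hH ⊢
      exact ⟨hH.1, fun h => hH.2.ne' h.2⟩
    · rintro ⟨⟨S, P⟩, ⟨⟨hS, hcard⟩, hP, ⟨x, hx⟩⟩, rfl⟩
      dsimp only at hS hcard hP hx ⊢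
      obtain ⟨h1, h2⟩ := fc_face' hS hP hx
      refine ⟨⟨x, by rw [fc_face hg, h1, h2]⟩, ?_⟩
      rw [fc_dim hg hS hx]
      have := hs S hS ⟨x, hx.1⟩
      omega
  have hinj : Set.InjOn
      (fun d : (_ : Finset (Set (Fin l → ℝ))) × Finset (Set (Fin l → ℝ)) => fcF g A d.1 d.2)
        (D : Set ((_ : Finset (Set (Fin l → ℝ))) × Finset (Set (Fin l → ℝ)))) := by
    rintro ⟨S, P⟩ hd ⟨S', P'⟩ hd' he
    rw [Finset.mem_coe, hDm] at hd hd'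
    dsimp only at hd hd' he
    obtain ⟨x, hx⟩ := hd.2.2
    obtain ⟨h1, h2⟩ := fc_face' hd.1.1 hd.2.1 hx
    obtain ⟨h3, h4⟩ := fc_face' hd'.1.1 hd'.2.1 (he ▸ hx)
    rw [← h1, ← h2, h3, h4]
  rw [himg, Nat.card_coe_set_eq, Set.InjOn.ncard_image hinj, Set.ncard_coe_finset]
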